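/- Let T > 0 and let (Λ_k)_{k≥1} be a sequence of positive real numbers such that ∑_{k≥1} 1/Λ_k < +∞ and such that there is a constant ρ > 0 with |Λ_k − Λ_l| ≥ ρ|k − l| for all k, l ≥ 1. Then there exists a family (q_k)_{k≥1} of functions in L²(0,T) that is biorthogonal to the family of exponentials (e^{−Λ_k t})_{k≥1}, i.e. ∫₀ᵀ q_k(t) e^{−Λ_l t} dt equals 1 if k = l and 0 if k ≠ l. Moreover, for every ε > 0 there exists C_ε > 0 such that ‖q_k‖_{L²(0,T)} ≤ C_ε e^{ε Λ_k} for all k ≥ 1. -/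

import Mathlib

open MeasureTheory

/-!
The dual vector `q_k` of minimal norm comes from projecting `e^{-Λ_k t}` onto the orthogonal
complement of the closed span of the other exponentials, and `‖q_k‖` is the inverse of the
distance of `e^{-Λ_k t}` to that span. Hence it suffices to find, for each finite set `F` of other
indices, a function dual to `e^{-Λ_k t}` and orthogonal to `e^{-Λ_l t}` for `l ∈ F`, with norm at
most `C e^{ε Λ_k}`, where `C` does not depend on `F`.

Such a function is obtained by applying to the normalized indicator of a short interval `(0, s)`,
for each `l ∈ F`, the filter `(B U - 1) (U + 1) / (2 (B - 1))`, where `U` is the translation by a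
step `h_l` and `B = e^{h_l Λ_l}`. It annihilates the pairing with `e^{-Λ_l t}`, lengthens the
support by `2 h_l`, multiplies the pairing with `e^{-c t}` by at least
`|1 - c / Λ_l| e^{-2 h_l c}` in absolute value, and is a contraction of `L²` as soon as `B ≥ 6`.
Taking `h_l = log 6 / Λ_l` for all but finitely many `l`, with small steps for the others, keeps
the total support in `(0, T)` because `∑ 1 / Λ_l` converges.

What remains is the bound `∏_{l ∈ F} |1 - Λ_k / Λ_l| ≥ C e^{-ε Λ_k}`. The factors with
`Λ_l ≥ 2 Λ_k` are controlled by summability. For the others the gap condition bounds the sum of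
the logarithms by `O(√(n Λ_k))`, where `n` is the number of such `l`, and `n = o(Λ_k)` by
summability.
-/

section ProductBound

open Real Finset

lemma log_one_add_le_two_mul_sqrt {x : ℝ} (hx : 0 ≤ x) : log (1 + x) ≤ 2 * √x := by
  have hle : 1 + x ≤ (1 + √x) ^ 2 := by nlinarith [sq_sqrt hx, sqrt_nonneg x]
  calc log (1 + x) ≤ log ((1 + √x) ^ 2) := log_le_log (by positivity) hle
    _ = 2 * log (1 + √x) := by rw [log_pow, Nat.cast_ofNat]
    _ ≤ 2 * √x := by
      have := log_le_sub_one_of_pos (show 0 < 1 + √x by positivity)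
      linarith

lemma inv_sqrt_add_one_le {x : ℝ} (hx : 0 ≤ x) : (√(x + 1))⁻¹ ≤ 2 * (√(x + 1) - √x) := by
  have hpos : 0 < √(x + 1) := sqrt_pos.2 (by linarith)
  rw [inv_le_iff_one_le_mul₀ hpos]
  nlinarith [sq_sqrt hx, sq_sqrt (show 0 ≤ x + 1 by linarith), sq_nonneg (√(x + 1) - √x)]

lemma sum_inv_sqrt_le_two_mul_sqrt_card {F : Finset ℕ} (hF : 0 ∉ F) :
    ∑ m ∈ F, (√(m : ℝ))⁻¹ ≤ 2 * √(#F : ℝ) := by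
  induction F using Finset.induction_on_max with
  | empty => simp
  | insert a F hlt ih =>
    have ha : a ∉ F := fun h ↦ lt_irrefl _ (hlt a h)
    have hcard : #F + 1 ≤ a := by
      have hsub : insert 0 F ⊆ range a := by
        intro m hm
        rcases mem_insert.1 hm with rfl | hm
        · exact mem_range.2 (Nat.pos_of_ne_zero fun h ↦ hF (h ▸ mem_insert_self a F))
        · exact mem_range.2 (hlt m hm)
      simpa [card_insert_of_notMem fun h ↦ hF (mem_insert_of_mem h)] using card_le_card hsub
    have hlast : (√(a : ℝ))⁻¹ ≤ (√((#F : ℝ) + 1))⁻¹ := by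
      gcongr
      exact_mod_cast hcard
    rw [sum_insert ha, card_insert_of_notMem ha, Nat.cast_add_one]
    linarith [ih fun h ↦ hF (mem_insert_of_mem h), inv_sqrt_add_one_le (#F).cast_nonneg]

lemma sum_inv_sqrt_le_of_injOn {ι : Type*} {F : Finset ι} {g : ι → ℕ} (hg : Set.InjOn g F)
    (hpos : ∀ l ∈ F, 0 < g l) : ∑ l ∈ F, (√(g l : ℝ))⁻¹ ≤ 2 * √(#F : ℝ) := by
  rw [← card_image_of_injOn hg, ← sum_image (f := fun m : ℕ ↦ (√(m : ℝ))⁻¹) hg]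
  refine sum_inv_sqrt_le_two_mul_sqrt_card fun h ↦ ?_
  obtain ⟨l, hl, hl0⟩ := mem_image.1 h
  exact (hpos l hl).ne' hl0

lemma sum_inv_sqrt_abs_sub_le {k : ℕ} {F : Finset ℕ} (hk : k ∉ F) :
    ∑ l ∈ F, (√|(k : ℝ) - l|)⁻¹ ≤ 4 * √(#F : ℝ) := by
  have hbelow : ∑ l ∈ F with l < k, (√|(k : ℝ) - l|)⁻¹ ≤ 2 * √(#F : ℝ) := calc
    _ = ∑ l ∈ F with l < k, (√((k - l : ℕ) : ℝ))⁻¹ := by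
      refine sum_congr rfl fun l hl ↦ ?_
      have hlk := (mem_filter.1 hl).2.le
      rw [Nat.cast_sub hlk, abs_of_nonneg (sub_nonneg.2 (Nat.cast_le.2 hlk))]
    _ ≤ 2 * √(#{l ∈ F | l < k} : ℝ) := by
      refine sum_inv_sqrt_le_of_injOn (fun a ha b hb h ↦ ?_) fun l hl ↦ ?_ <;>
        simp only [coe_filter, mem_filter, Set.mem_ofPred_eq] at * <;> omega
    _ ≤ 2 * √(#F : ℝ) := by gcongr; exact filter_subset _ _
  have habove : ∑ l ∈ F with ¬ l < k, (√|(k : ℝ) - l|)⁻¹ ≤ 2 * √(#F : ℝ) := calc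
    _ = ∑ l ∈ F with ¬ l < k, (√((l - k : ℕ) : ℝ))⁻¹ := by
      refine sum_congr rfl fun l hl ↦ ?_
      have hkl := not_lt.1 (mem_filter.1 hl).2
      rw [Nat.cast_sub hkl, abs_sub_comm, abs_of_nonneg (sub_nonneg.2 (Nat.cast_le.2 hkl))]
    _ ≤ 2 * √(#{l ∈ F | ¬ l < k} : ℝ) := by
      refine sum_inv_sqrt_le_of_injOn (fun a ha b hb h ↦ ?_) fun l hl ↦ ?_
      · simp only [coe_filter, Set.mem_ofPred_eq] at *
        omega
      · have hlk : l ≠ k := ne_of_mem_of_not_mem (mem_filter.1 hl).1 hk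
        have := (mem_filter.1 hl).2
        omega
    _ ≤ 2 * √(#F : ℝ) := by gcongr; exact filter_subset _ _
  rw [← sum_filter_add_sum_filter_not F (· < k)]
  linarith

lemma sum_log_one_add_div_abs_sub_le {a θ : ℝ} (ha : 0 ≤ a) (hθ : 0 < θ) {k : ℕ} {F : Finset ℕ}
    (hk : k ∉ F) : ∑ l ∈ F, log (1 + a / |(k : ℝ) - l|) ≤ θ * a + 16 / θ * #F := by
  have hyoung : 8 * (√a * √(#F : ℝ)) ≤ θ * a + 16 / θ * #F := by
    have hsq : θ * a + 16 / θ * #F - 8 * (√a * √(#F : ℝ)) = (θ * √a - 4 * √(#F : ℝ)) ^ 2 / θ := by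
      nth_rw 1 [← sq_sqrt ha, ← sq_sqrt (#F).cast_nonneg]
      field_simp
      ring
    rw [← sub_nonneg, hsq]
    positivity
  calc ∑ l ∈ F, log (1 + a / |(k : ℝ) - l|)
      ≤ ∑ l ∈ F, 2 * √a * (√|(k : ℝ) - l|)⁻¹ := by
        refine sum_le_sum fun l _ ↦ (log_one_add_le_two_mul_sqrt (by positivity)).trans_eq ?_
        rw [sqrt_div ha, div_eq_mul_inv, mul_assoc]
    _ = 2 * √a * ∑ l ∈ F, (√|(k : ℝ) - l|)⁻¹ := by rw [mul_sum]
    _ ≤ 2 * √a * (4 * √(#F : ℝ)) := by gcongr; exact sum_inv_sqrt_abs_sub_le hk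
    _ = 8 * (√a * √(#F : ℝ)) := by ring
    _ ≤ θ * a + 16 / θ * #F := hyoung

lemma exists_sum_min_one_mul_le {ι : Type*} {f : ι → ℝ} (hf : Summable f) {η : ℝ} (hη : 0 < η) :
    ∃ C : ℝ, ∀ x ≥ 0, ∀ F : Finset ι, ∑ l ∈ F, min 1 (x * f l) ≤ C + η * x := by
  classical
  obtain ⟨s, hs⟩ := summable_iff_vanishing_norm.1 hf η hη
  refine ⟨#s, fun x hx F ↦ ?_⟩
  rw [← sum_inter_add_sum_sdiff F s]
  gcongr
  · calc ∑ l ∈ F ∩ s, min 1 (x * f l) ≤ #(F ∩ s) • (1 : ℝ) :=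
        sum_le_card_nsmul _ _ _ fun l _ ↦ min_le_left _ _
      _ = #(F ∩ s) := nsmul_one _
      _ ≤ #s := by gcongr; exact inter_subset_right
  · calc ∑ l ∈ F \ s, min 1 (x * f l) ≤ ∑ l ∈ F \ s, x * f l :=
        sum_le_sum fun l _ ↦ min_le_right _ _
      _ = (∑ l ∈ F \ s, f l) * x := by rw [← mul_sum, mul_comm]
      _ ≤ η * x := by gcongr; exact (le_abs_self _).trans (hs _ sdiff_disjoint).le

lemma exp_neg_log_one_add_div_abs_sub_le {x y : ℝ} (hx : 0 < x) (hy : 0 < y) (hxy : x ≠ y) :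
    exp (-log (1 + x / |x - y|)) ≤ |1 - x / y| := by
  have hquot : |1 - x / y| = |x - y| / y := by
    rw [one_sub_div hy.ne', abs_div, abs_of_pos hy, abs_sub_comm]
  have hsum : y ≤ |x - y| + x := by linarith [neg_abs_le (x - y)]
  rw [exp_neg, exp_log (by positivity), hquot, inv_le_iff_one_le_mul₀ (by positivity)]
  calc 1 ≤ (|x - y| + x) / y := (one_le_div hy).2 hsum
    _ = |x - y| / y * (1 + x / |x - y|) := by field_simp

lemma log_one_add_div_abs_sub_le_min {x y : ℝ} (hx : 0 < x) (hxy : 2 * x ≤ y) :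
    log (1 + x / |x - y|) ≤ min 1 (2 * x * (1 / y)) := by
  have hy : 0 < y := by linarith
  have hdist : y / 2 ≤ |x - y| := by linarith [neg_abs_le (x - y)]
  have hratio : 2 * x * (1 / y) ≤ 1 := by rwa [mul_one_div, div_le_one hy]
  rw [min_eq_right hratio]
  calc log (1 + x / |x - y|) ≤ x / |x - y| := by
        linarith [log_le_sub_one_of_pos (show 0 < 1 + x / |x - y| by positivity)]
    _ ≤ x / (y / 2) := by gcongr
    _ = 2 * x * (1 / y) := by field_simp

variable {Λ : ℕ → ℝ} {ρ : ℝ}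

lemma sum_log_one_add_div_abs_sub_le_of_gap (hρ : 0 < ρ)
    (hgap : ∀ k l : ℕ, ρ * |(k : ℝ) - l| ≤ |Λ k - Λ l|) {x θ : ℝ} (hx : 0 ≤ x) (hθ : 0 < θ)
    {k : ℕ} {F : Finset ℕ} (hk : k ∉ F) :
    ∑ l ∈ F, log (1 + x / |Λ k - Λ l|) ≤ θ * (x / ρ) + 16 / θ * #F := by
  refine (sum_le_sum fun l hl ↦ ?_).trans
    (sum_log_one_add_div_abs_sub_le (div_nonneg hx hρ.le) hθ hk)
  have hkl : (k : ℝ) - l ≠ 0 :=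
    sub_ne_zero.2 (Nat.cast_injective.ne (ne_of_mem_of_not_mem hl hk).symm)
  rw [div_div]
  gcongr
  exact hgap k l

lemma exists_sum_log_one_add_div_abs_sub_le (hΛ : ∀ k, 0 < Λ k)
    (hsum : Summable fun k ↦ 1 / Λ k) (hρ : 0 < ρ)
    (hgap : ∀ k l : ℕ, ρ * |(k : ℝ) - l| ≤ |Λ k - Λ l|) {ε : ℝ} (hε : 0 < ε) :
    ∃ C : ℝ, ∀ k, ∀ F : Finset ℕ, k ∉ F →
      ∑ l ∈ F, log (1 + Λ k / |Λ k - Λ l|) ≤ C + ε * Λ k := by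
  set θ := ρ * ε / 2 with hθ
  have hθpos : 0 < θ := by positivity
  set c := 1 + 16 / θ
  have hc : 0 < c := by positivity
  obtain ⟨C, hC⟩ := exists_sum_min_one_mul_le hsum (show 0 < ε / (4 * c) by positivity)
  refine ⟨c * C, fun k F hk ↦ ?_⟩
  have hΛk := hΛ k
  have hmin := hC (2 * Λ k) (by positivity) F
  rw [← sum_filter_add_sum_filter_not F (fun l ↦ Λ l < 2 * Λ k)] at hmin ⊢
  set near := {l ∈ F | Λ l < 2 * Λ k}
  set far := {l ∈ F | ¬ Λ l < 2 * Λ k}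
  have hcard : ∑ l ∈ near, min 1 (2 * Λ k * (1 / Λ l)) = #near := by
    rw [card_eq_sum_ones, Nat.cast_sum, Nat.cast_one]
    refine sum_congr rfl fun l hl ↦ min_eq_left ?_
    rw [mul_one_div, one_le_div (hΛ l)]
    exact (mem_filter.1 hl).2.le
  have hnear : ∑ l ∈ near, log (1 + Λ k / |Λ k - Λ l|) ≤ θ * (Λ k / ρ) + 16 / θ * #near :=
    sum_log_one_add_div_abs_sub_le_of_gap hρ hgap hΛk.le hθpos fun h ↦ hk (mem_filter.1 h).1
  have hfar : ∑ l ∈ far, log (1 + Λ k / |Λ k - Λ l|) ≤ ∑ l ∈ far, min 1 (2 * Λ k * (1 / Λ l)) := by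
    refine sum_le_sum fun l hl ↦ ?_
    exact log_one_add_div_abs_sub_le_min (hΛ k) (not_lt.1 (mem_filter.1 hl).2)
  have hfar_nonneg : 0 ≤ ∑ l ∈ far, min 1 (2 * Λ k * (1 / Λ l)) :=
    sum_nonneg fun l _ ↦ by have := hΛ l; positivity
  rw [hcard] at hmin
  calc ∑ l ∈ near, log (1 + Λ k / |Λ k - Λ l|) + ∑ l ∈ far, log (1 + Λ k / |Λ k - Λ l|)
      ≤ θ * (Λ k / ρ) + c * (#near + ∑ l ∈ far, min 1 (2 * Λ k * (1 / Λ l))) := by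
        have : 0 ≤ 16 / θ * ∑ l ∈ far, min 1 (2 * Λ k * (1 / Λ l)) := by positivity
        linarith
    _ ≤ θ * (Λ k / ρ) + c * (C + ε / (4 * c) * (2 * Λ k)) := by gcongr
    _ = c * C + ε * Λ k := by
      have hθρ : θ * (Λ k / ρ) = ε * Λ k / 2 := by
        rw [hθ]
        field_simp
      rw [hθρ]
      field_simp
      ring

lemma exists_mul_exp_neg_le_prod_abs_one_sub_div (hΛ : ∀ k, 0 < Λ k)
    (hsum : Summable fun k ↦ 1 / Λ k) (hρ : 0 < ρ)
    (hgap : ∀ k l : ℕ, ρ * |(k : ℝ) - l| ≤ |Λ k - Λ l|) {ε : ℝ} (hε : 0 < ε) :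
    ∃ C > 0, ∀ k, ∀ F : Finset ℕ, k ∉ F →
      C * exp (-(ε * Λ k)) ≤ ∏ l ∈ F, |1 - Λ k / Λ l| := by
  obtain ⟨C, hC⟩ := exists_sum_log_one_add_div_abs_sub_le hΛ hsum hρ hgap hε
  have hinj : Function.Injective Λ := fun k l h ↦ by
    have := hgap k l
    rw [h, sub_self, abs_zero] at this
    exact_mod_cast sub_eq_zero.1 (abs_nonpos_iff.1 (nonpos_of_mul_nonpos_right this hρ))
  refine ⟨exp (-C), exp_pos _, fun k F hk ↦ ?_⟩
  calc exp (-C) * exp (-(ε * Λ k)) = exp (-(C + ε * Λ k)) := by rw [← exp_add, neg_add]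
    _ ≤ exp (-∑ l ∈ F, log (1 + Λ k / |Λ k - Λ l|)) := by gcongr; exact hC k F hk
    _ = ∏ l ∈ F, exp (-log (1 + Λ k / |Λ k - Λ l|)) := by rw [← exp_sum, sum_neg_distrib]
    _ ≤ ∏ l ∈ F, |1 - Λ k / Λ l| := by
      refine prod_le_prod (fun _ _ ↦ (exp_pos _).le) fun l hl ↦ ?_
      exact exp_neg_log_one_add_div_abs_sub_le (hΛ k) (hΛ l)
        (hinj.ne (ne_of_mem_of_not_mem hl hk).symm)

end ProductBound

section Duals

open scoped InnerProductSpace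

variable {E : Type*} [NormedAddCommGroup E] [InnerProductSpace ℝ E]

lemma exists_mem_orthogonal_inner_eq_one {V : Submodule ℝ E} [V.HasOrthogonalProjection] {x : E}
    (hx : x ∉ V) : ∃ q ∈ Vᗮ, ⟪q, x⟫_ℝ = 1 ∧ ‖q‖ = (Metric.infDist x V)⁻¹ := by
  set u := x - V.starProjection x
  have huV : u ∈ Vᗮ := V.sub_starProjection_mem_orthogonal x
  have hu0 : ‖u‖ ≠ 0 := norm_ne_zero_iff.2 <| sub_ne_zero.2 fun h ↦
    hx (h ▸ V.starProjection_apply_mem x)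
  have hinner : ⟪u, x⟫_ℝ = ‖u‖ ^ 2 := by
    nth_rw 1 [← sub_add_cancel x (V.starProjection x)]
    rw [inner_add_right, V.inner_left_of_mem_orthogonal (V.starProjection_apply_mem x) huV,
      add_zero, real_inner_self_eq_norm_sq]
  have hdist : Metric.infDist x V = ‖u‖ := by
    simp_rw [Metric.infDist_eq_iInf, dist_eq_norm]
    exact (V.starProjection_minimal x).symm
  refine ⟨(‖u‖ ^ 2)⁻¹ • u, Vᗮ.smul_mem _ huV, ?_, ?_⟩
  · rw [real_inner_smul_left, hinner, inv_mul_cancel₀ (pow_ne_zero 2 hu0)]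
  · rw [norm_smul, norm_inv, norm_pow, norm_norm, hdist]
    field_simp

variable {ι : Type*}

/-- The quantitative minimality of `e k` in the family `e`, tested on finite subfamilies: for every
finite set `F` of other indices, some vector of norm at most `b` is dual to `e k` and orthogonal
to `e l` for all `l ∈ F`. -/
def HasFiniteDuals (e : ι → E) (k : ι) (b : ℝ) : Prop :=
  ∀ F : Finset ι, k ∉ F → ∃ q : E, ‖q‖ ≤ b ∧ ⟪q, e k⟫_ℝ = 1 ∧ ∀ l ∈ F, ⟪q, e l⟫_ℝ = 0

namespace HasFiniteDuals

variable {e : ι → E} {k : ι} {b : ℝ}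

lemma pos (h : HasFiniteDuals e k b) : 0 < b := by
  obtain ⟨q, hq, hqk, -⟩ := h ∅ (Finset.notMem_empty k)
  refine (norm_pos_iff.2 fun h0 ↦ ?_).trans_le hq
  rw [h0, inner_zero_left] at hqk
  exact zero_ne_one hqk

lemma inv_le_infDist (h : HasFiniteDuals e k b) :
    b⁻¹ ≤ Metric.infDist (e k) (Submodule.span ℝ (e '' {k}ᶜ)) := by
  rw [Metric.le_infDist (Submodule.nonempty _)]
  intro v hv
  obtain ⟨c, hc, rfl⟩ := (Finsupp.mem_span_image_iff_linearCombination ℝ).1 hv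
  obtain ⟨q, hq, hqk, hqF⟩ := h c.support fun hk ↦ hc hk rfl
  have hqv : ⟪q, Finsupp.linearCombination ℝ e c⟫_ℝ = 0 := by
    rw [Finsupp.linearCombination_apply, Finsupp.sum, inner_sum]
    exact Finset.sum_eq_zero fun l hl ↦ by rw [real_inner_smul_right, hqF l hl, mul_zero]
  rw [inv_le_iff_one_le_mul₀' h.pos, dist_eq_norm]
  set v := Finsupp.linearCombination ℝ e c
  calc (1 : ℝ) = ⟪q, e k - v⟫_ℝ := by rw [inner_sub_right, hqk, hqv, sub_zero]
    _ ≤ ‖q‖ * ‖e k - v‖ := real_inner_le_norm _ _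
    _ ≤ b * ‖e k - v‖ := by gcongr

lemma exists_biorthogonal [CompleteSpace E] (h : ∀ k, ∃ b, HasFiniteDuals e k b) [DecidableEq ι] :
    ∃ q : ι → E, (∀ k l, ⟪q k, e l⟫_ℝ = if k = l then 1 else 0) ∧
      ∀ k b, HasFiniteDuals e k b → ‖q k‖ ≤ b := by
  let V (k : ι) := (Submodule.span ℝ (e '' {k}ᶜ)).topologicalClosure
  have hdist {k : ι} {b : ℝ} (hb : HasFiniteDuals e k b) :
      b⁻¹ ≤ Metric.infDist (e k) (V k) := by
    rw [Submodule.topologicalClosure_coe, Metric.infDist_closure]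
    exact hb.inv_le_infDist
  have hnotMem (k : ι) : e k ∉ V k := fun hk ↦ by
    obtain ⟨b, hb⟩ := h k
    have := hdist hb
    rw [Metric.infDist_zero_of_mem hk] at this
    exact (inv_pos.2 hb.pos).not_ge this
  choose q hqV hqk hq using fun k ↦ exists_mem_orthogonal_inner_eq_one (hnotMem k)
  refine ⟨q, fun k l ↦ ?_, fun k b hb ↦ ?_⟩
  · split_ifs with hkl
    · exact hkl ▸ hqk k
    · refine (V k).inner_left_of_mem_orthogonal (Submodule.le_topologicalClosure _ ?_) (hqV k)
      exact Submodule.subset_span ⟨l, Ne.symm hkl, rfl⟩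
  · rw [hq]
    exact inv_le_of_inv_le₀ hb.pos (hdist hb)

end HasFiniteDuals

end Duals

section Notch

open scoped InnerProductSpace

variable {E : Type*} [NormedAddCommGroup E] [InnerProductSpace ℝ E]

/-- The operator `(B U - 1) (U + 1) / (2 (B - 1))`. It fixes the vectors fixed by `U` and
annihilates its eigenvectors of eigenvalue `B⁻¹`; the factor `U + 1`, which damps the eigenvalues
near `-1`, is what makes it a contraction for large `B`. -/
noncomputable def notch (U : E →ₗᵢ[ℝ] E) (B : ℝ) : E →L[ℝ] E :=
  (2 * (B - 1))⁻¹ • ((B • U.toContinuousLinearMap - 1) * (U.toContinuousLinearMap + 1))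

lemma notch_apply (U : E →ₗᵢ[ℝ] E) (B : ℝ) (f : E) :
    notch U B f = (2 * (B - 1))⁻¹ • (B • U (U f) + (B - 1) • U f - f) := by
  simp only [notch, smul_apply, mul_apply_eq_comp, sub_apply, add_apply, one_apply_eq_self,
    LinearIsometry.coe_toContinuousLinearMap, map_add]
  module

lemma norm_notch_le_one (U : E →ₗᵢ[ℝ] E) {B : ℝ} (hB : 1 < B) (hB' : 4 * B ≤ (B - 1) ^ 2) :
    ‖notch U B‖ ≤ 1 := by
  refine ContinuousLinearMap.opNorm_le_bound _ zero_le_one fun f ↦ ?_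
  have hUU : ⟪U (U f), U f⟫_ℝ = ⟪U f, f⟫_ℝ := U.inner_map_map _ _
  have hcs : ⟪U f, f⟫_ℝ ≤ ‖f‖ ^ 2 := by
    simpa [sq] using real_inner_le_norm (U f) f
  have hdiff : 0 ≤ 6 * ‖f‖ ^ 2 - 8 * ⟪U f, f⟫_ℝ + 2 * ⟪U (U f), f⟫_ℝ := by
    have hsq := sq_nonneg ‖U (U f) - (2 : ℝ) • U f + f‖
    rw [norm_add_sq_real, norm_sub_sq_real, inner_sub_left, real_inner_smul_left,
      real_inner_smul_right, hUU, norm_smul, U.norm_map, U.norm_map, Real.norm_ofNat] at hsq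
    linarith
  have hexpand : ‖B • U (U f) + (B - 1) • U f - f‖ ^ 2 = (B ^ 2 + (B - 1) ^ 2 + 1) * ‖f‖ ^ 2
      + 2 * (B - 1) ^ 2 * ⟪U f, f⟫_ℝ - 2 * B * ⟪U (U f), f⟫_ℝ := by
    rw [norm_sub_sq_real, norm_add_sq_real, inner_add_left]
    simp only [real_inner_smul_left, real_inner_smul_right, hUU, norm_smul, U.norm_map, mul_pow,
      Real.norm_eq_abs, sq_abs]
    ring
  have hbound : ‖B • U (U f) + (B - 1) • U f - f‖ ^ 2 ≤ (2 * (B - 1) * ‖f‖) ^ 2 := by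
    -- The difference of the two sides is `B ‖U²f - 2Uf + f‖² + 2 ((B - 1)² - 4B) (‖f‖² - ⟪Uf, f⟫)`.
    rw [hexpand]
    linarith [mul_nonneg (zero_le_one.trans hB.le) hdiff,
      mul_nonneg (sub_nonneg.2 hB') (sub_nonneg.2 hcs)]
  rw [notch_apply, norm_smul, norm_inv, Real.norm_of_nonneg (by positivity), one_mul,
    inv_mul_le_iff₀ (by positivity)]
  exact le_of_sq_le_sq hbound (by positivity)

/-- The factor by which `notch U (exp (h * L))` multiplies `⟪·, e⟫` when `⟪U ·, e⟫` is
`exp (-c * h) • ⟪·, e⟫`. -/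
noncomputable def notchMultiplier (h L c : ℝ) : ℝ :=
  (Real.exp (h * (L - c)) - 1) * (Real.exp (-c * h) + 1) / (2 * (Real.exp (h * L) - 1))

@[simp]
lemma notchMultiplier_self (h L : ℝ) : notchMultiplier h L L = 0 := by
  simp [notchMultiplier]

lemma inner_notch {U : E →ₗᵢ[ℝ] E} {f e : E} {h c : ℝ}
    (hf : ⟪U f, e⟫_ℝ = Real.exp (-c * h) * ⟪f, e⟫_ℝ)
    (hUf : ⟪U (U f), e⟫_ℝ = Real.exp (-c * h) * ⟪U f, e⟫_ℝ) (L : ℝ) :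
    ⟪notch U (Real.exp (h * L)) f, e⟫_ℝ = notchMultiplier h L c * ⟪f, e⟫_ℝ := by
  have hexp : Real.exp (h * (L - c)) = Real.exp (h * L) * Real.exp (-c * h) := by
    rw [← Real.exp_add]
    ring_nf
  rw [notch_apply, real_inner_smul_left, inner_sub_left, inner_add_left, real_inner_smul_left,
    real_inner_smul_left, hUf, hf, notchMultiplier, hexp]
  ring

lemma abs_one_sub_mul_sub_one_le_abs_sub_rpow {B x : ℝ} (hB : 1 ≤ B) (hx : 0 ≤ x) :
    |1 - x| * (B - 1) ≤ |B - B ^ x| := by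
  have hB' : 1 + (B - 1) = B := add_sub_cancel 1 B
  rcases le_total x 1 with h | h
  · have hbern := rpow_one_add_le_one_add_mul_self (show -1 ≤ B - 1 by linarith) hx h
    rw [hB'] at hbern
    rw [abs_of_nonneg (sub_nonneg.2 h)]
    exact le_trans (by linarith) (le_abs_self _)
  · have hbern := one_add_mul_self_le_rpow_one_add (show -1 ≤ B - 1 by linarith) h
    rw [hB'] at hbern
    rw [abs_of_nonpos (sub_nonpos.2 h)]
    exact le_trans (by linarith) (neg_le_abs _)

lemma abs_one_sub_div_mul_exp_le_abs_notchMultiplier {h L c : ℝ} (hh : 0 < h) (hL : 0 < L)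
    (hc : 0 ≤ c) : |1 - c / L| * Real.exp (-(2 * h * c)) ≤ |notchMultiplier h L c| := by
  set B := Real.exp (h * L) with hBdef
  set z := Real.exp (-c * h) with hz
  have hB : 1 < B := Real.one_lt_exp_iff.2 (by positivity)
  have hz0 : 0 < z := Real.exp_pos _
  have hz1 : z ≤ 1 := Real.exp_le_one_iff.2 (by nlinarith)
  have hzsq : Real.exp (-(2 * h * c)) = z * z := by
    rw [hz, ← Real.exp_add]
    ring_nf
  have hfirst : Real.exp (h * (L - c)) - 1 = (B - B ^ (c / L)) * z := by
    rw [sub_mul, hBdef, ← Real.exp_mul, hz, ← Real.exp_add, ← Real.exp_add]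
    congr 1
    · ring_nf
    · rw [eq_comm, Real.exp_eq_one_iff]
      field_simp
      ring
  rw [notchMultiplier, abs_div, abs_mul, hfirst, abs_mul, abs_of_pos hz0, hzsq,
    abs_of_pos (show 0 < z + 1 by linarith),
    abs_of_pos (show 0 < 2 * (B - 1) by linarith), le_div_iff₀ (by linarith)]
  calc |1 - c / L| * (z * z) * (2 * (B - 1)) = |1 - c / L| * (B - 1) * z * (2 * z) := by ring
    _ ≤ |B - B ^ (c / L)| * z * (z + 1) := by
      gcongr
      · exact abs_one_sub_mul_sub_one_le_abs_sub_rpow hB.le (by positivity)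
      · linarith

lemma prod_mul_exp_le_abs_prod_notchMultiplier {ι : Type*} {h Λ : ι → ℝ} {c : ℝ}
    (hh : ∀ l, 0 < h l) (hΛ : ∀ l, 0 < Λ l) (hc : 0 ≤ c) (F : Finset ι) :
    (∏ l ∈ F, |1 - c / Λ l|) * Real.exp (-((∑ l ∈ F, 2 * h l) * c)) ≤
      |∏ l ∈ F, notchMultiplier (h l) (Λ l) c| := by
  rw [Finset.sum_mul, ← Finset.sum_neg_distrib, Real.exp_sum, ← Finset.prod_mul_distrib,
    Finset.abs_prod]
  exact Finset.prod_le_prod (fun _ _ ↦ by positivity) fun l _ ↦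
    abs_one_sub_div_mul_exp_le_abs_notchMultiplier (hh l) (hΛ l) hc

end Notch

section Steps

open Finset Filter

variable {ι : Type*}

lemma exists_pos_eventually_eq_sum_le {g : ι → ℝ} (hg : Summable g) (hpos : ∀ l, 0 < g l)
    {δ : ℝ} (hδ : 0 < δ) :
    ∃ h : ι → ℝ, (∀ l, 0 < h l) ∧ (∀ᶠ l in cofinite, h l = g l) ∧
      ∀ F : Finset ι, ∑ l ∈ F, h l ≤ δ := by
  classical
  obtain ⟨s, hs⟩ := summable_iff_vanishing_norm.1 hg (δ / 2) (half_pos hδ)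
  set r := δ / (2 * (#s + 1)) with hr
  have hr0 : 0 < r := by positivity
  refine ⟨fun l ↦ if l ∈ s then r else g l, fun l ↦ ?_, ?_, fun F ↦ ?_⟩
  · dsimp only
    split_ifs
    exacts [hr0, hpos l]
  · filter_upwards [s.finite_toSet.compl_mem_cofinite] with l hl
    exact if_neg hl
  have hhead : ∑ l ∈ F ∩ s, (if l ∈ s then r else g l) ≤ δ / 2 := calc
    _ = #(F ∩ s) * r := by
      rw [sum_congr rfl fun l hl ↦ if_pos (mem_inter.1 hl).2, sum_const, nsmul_eq_mul]
    _ ≤ (#s + 1) * r := by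
      gcongr
      exact_mod_cast (card_le_card inter_subset_right).trans (Nat.le_succ _)
    _ = δ / 2 := by
      rw [hr]
      field_simp
  have htail : ∑ l ∈ F \ s, (if l ∈ s then r else g l) ≤ δ / 2 := calc
    _ = ∑ l ∈ F \ s, g l := sum_congr rfl fun l hl ↦ if_neg (mem_sdiff.1 hl).2
    _ ≤ δ / 2 := (le_abs_self _).trans (hs _ sdiff_disjoint).le
  rw [← sum_inter_add_sum_sdiff F s]
  linarith

lemma exists_prod_le_of_eventually_le_one {K : ι → ℝ} (hK : ∀ l, 0 ≤ K l)
    (hK1 : ∀ᶠ l in cofinite, K l ≤ 1) : ∃ C : ℝ, ∀ F : Finset ι, ∏ l ∈ F, K l ≤ C := by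
  classical
  set s := (eventually_cofinite.1 hK1).toFinset with hs
  obtain ⟨C, hC⟩ := s.powerset.image (fun G ↦ ∏ l ∈ G, K l) |>.exists_le
  refine ⟨C, fun F ↦ ?_⟩
  rw [← prod_inter_mul_prod_sdiff F s]
  calc (∏ l ∈ F ∩ s, K l) * ∏ l ∈ F \ s, K l ≤ (∏ l ∈ F ∩ s, K l) * 1 := by
        gcongr
        · exact prod_nonneg fun l _ ↦ hK l
        · refine prod_le_one (fun l _ ↦ hK l) fun l hl ↦ ?_
          simpa [hs] using (mem_sdiff.1 hl).2
    _ = ∏ l ∈ F ∩ s, K l := mul_one _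
    _ ≤ C := hC _ (mem_image_of_mem _ (mem_powerset.2 inter_subset_right))

end Steps

section Translation

open Set Real
open scoped InnerProductSpace

/-- The subspace of the functions in `L²(ℝ)` that vanish almost everywhere outside `S`. -/
def supportedIn (S : Set ℝ) : Submodule ℝ (Lp ℝ 2 (volume : Measure ℝ)) where
  carrier := {f | ∀ᵐ t, t ∉ S → f t = 0}
  zero_mem' := by
    filter_upwards [Lp.coeFn_zero ℝ 2 (volume : Measure ℝ)] with t ht _
    exact ht
  add_mem' {f g} (hf : ∀ᵐ t, t ∉ S → f t = 0) (hg : ∀ᵐ t, t ∉ S → g t = 0) := by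
    change ∀ᵐ t, t ∉ S → (f + g) t = 0
    filter_upwards [Lp.coeFn_add f g, hf, hg] with t ht hft hgt htS
    rw [ht, Pi.add_apply, hft htS, hgt htS, add_zero]
  smul_mem' a f (hf : ∀ᵐ t, t ∉ S → f t = 0) := by
    change ∀ᵐ t, t ∉ S → (a • f) t = 0
    filter_upwards [Lp.coeFn_smul a f, hf] with t ht hft htS
    rw [ht, Pi.smul_apply, hft htS, smul_zero]

lemma mem_supportedIn {S : Set ℝ} {f : Lp ℝ 2 (volume : Measure ℝ)} :
    f ∈ supportedIn S ↔ ∀ᵐ t, t ∉ S → f t = 0 :=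
  Iff.rfl

lemma supportedIn_mono {S S' : Set ℝ} (h : S ⊆ S') : supportedIn S ≤ supportedIn S' := fun f hf ↦ by
  filter_upwards [mem_supportedIn.1 hf] with t ht htS
  exact ht fun hS ↦ htS (h hS)

lemma indicatorConstLp_mem_supportedIn {S : Set ℝ} (hS : MeasurableSet S) (hμS : volume S ≠ ⊤)
    (a : ℝ) : indicatorConstLp 2 hS hμS a ∈ supportedIn S := by
  filter_upwards [indicatorConstLp_coeFn (p := 2) (hs := hS) (hμs := hμS) (c := a)] with t ht htS
  rw [ht, indicator_of_notMem htS]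

/-- Translation by `h`, i.e. `f ↦ f (· - h)`, as an isometry of `L²(ℝ)`. -/
noncomputable def shift (h : ℝ) :
    Lp ℝ 2 (volume : Measure ℝ) →ₗᵢ[ℝ] Lp ℝ 2 (volume : Measure ℝ) :=
  Lp.compMeasurePreservingₗᵢ ℝ (· - h) (measurePreserving_sub_right volume h)

lemma coeFn_shift (h : ℝ) (f : Lp ℝ 2 (volume : Measure ℝ)) :
    shift h f =ᵐ[volume] fun t ↦ f (t - h) :=
  Lp.coeFn_compMeasurePreserving f (measurePreserving_sub_right volume h)

lemma shift_mem_supportedIn {f : Lp ℝ 2 (volume : Measure ℝ)} {s h : ℝ}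
    (hf : f ∈ supportedIn (Ioo 0 s)) (hh : 0 ≤ h) : shift h f ∈ supportedIn (Ioo 0 (s + h)) := by
  have hf' : ∀ᵐ t, t - h ∉ Ioo 0 s → f (t - h) = 0 :=
    (measurePreserving_sub_right volume h).quasiMeasurePreserving.ae hf
  filter_upwards [coeFn_shift h f, hf'] with t ht hft htS
  rw [ht]
  refine hft fun hts ↦ htS ⟨?_, ?_⟩ <;> linarith [hts.1, hts.2]

lemma memLp_indicator_Ioo_of_continuous {f : ℝ → ℝ} (hf : Continuous f) (a b : ℝ) (p : ENNReal) :
    MemLp ((Ioo a b).indicator f) p volume := by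
  rw [memLp_indicator_iff_restrict measurableSet_Ioo]
  obtain ⟨C, hC⟩ := isCompact_Icc.exists_bound_of_continuousOn (hf.continuousOn (s := Icc a b))
  refine MemLp.of_bound hf.aestronglyMeasurable C ?_
  filter_upwards [ae_restrict_mem measurableSet_Ioo] with t ht
  exact hC t (Ioo_subset_Icc_self ht)

/-- The exponential `e^{-c t}` on `(0, T)`, extended by zero to an element of `L²(ℝ)`. -/
noncomputable def truncExp (T c : ℝ) : Lp ℝ 2 (volume : Measure ℝ) :=
  (memLp_indicator_Ioo_of_continuous (f := fun t ↦ exp (-c * t)) (by fun_prop) 0 T 2).toLp _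

lemma coeFn_truncExp (T c : ℝ) :
    truncExp T c =ᵐ[volume] (Ioo 0 T).indicator fun t ↦ exp (-c * t) :=
  MemLp.coeFn_toLp _

lemma inner_truncExp (f : Lp ℝ 2 (volume : Measure ℝ)) (T c : ℝ) :
    ⟪f, truncExp T c⟫_ℝ = ∫ t in Ioo 0 T, f t * exp (-c * t) := by
  rw [L2.inner_def, ← integral_indicator measurableSet_Ioo]
  refine integral_congr_ae ?_
  filter_upwards [coeFn_truncExp T c] with t ht
  rw [ht, RCLike.inner_apply', conj_trivial, indicator_mul_right]

lemma inner_truncExp_of_mem_supportedIn {f : Lp ℝ 2 (volume : Measure ℝ)} {T : ℝ}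
    (hf : f ∈ supportedIn (Ioo 0 T)) (c : ℝ) :
    ⟪f, truncExp T c⟫_ℝ = ∫ t, f t * exp (-c * t) := by
  rw [inner_truncExp]
  refine setIntegral_eq_integral_of_ae_compl_eq_zero ?_
  filter_upwards [mem_supportedIn.1 hf] with t ht htT
  rw [ht htT, zero_mul]

lemma inner_shift_truncExp {f : Lp ℝ 2 (volume : Measure ℝ)} {s h T : ℝ}
    (hf : f ∈ supportedIn (Ioo 0 s)) (hh : 0 ≤ h) (hT : s + h ≤ T) (c : ℝ) :
    ⟪shift h f, truncExp T c⟫_ℝ = exp (-c * h) * ⟪f, truncExp T c⟫_ℝ := by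
  have hmem {r : ℝ} (hr : r ≤ T) : supportedIn (Ioo 0 r) ≤ supportedIn (Ioo 0 T) :=
    supportedIn_mono (Ioo_subset_Ioo_right hr)
  rw [inner_truncExp_of_mem_supportedIn (hmem hT (shift_mem_supportedIn hf hh)),
    inner_truncExp_of_mem_supportedIn (hmem (by linarith) hf), ← integral_const_mul,
    ← integral_sub_right_eq_self (fun t ↦ exp (-c * h) * (f t * exp (-c * t))) h]
  refine integral_congr_ae ?_
  filter_upwards [coeFn_shift h f] with t ht
  have hexp : exp (-c * t) = exp (-c * h) * exp (-c * (t - h)) := by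
    rw [← exp_add]
    ring_nf
  rw [ht, hexp]
  ring

lemma notch_shift_mem_supportedIn {f : Lp ℝ 2 (volume : Measure ℝ)} {s h : ℝ}
    (hf : f ∈ supportedIn (Ioo 0 s)) (hh : 0 ≤ h) (B : ℝ) :
    notch (shift h) B f ∈ supportedIn (Ioo 0 (s + 2 * h)) := by
  have hmem {r : ℝ} (hr : r ≤ s + 2 * h) :
      supportedIn (Ioo 0 r) ≤ supportedIn (Ioo 0 (s + 2 * h)) :=
    supportedIn_mono (Ioo_subset_Ioo_right hr)
  have hf₁ := shift_mem_supportedIn hf hh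
  have hf₂ := shift_mem_supportedIn hf₁ hh
  rw [notch_apply]
  refine Submodule.smul_mem _ _ (sub_mem (add_mem ?_ ?_) ?_)
  · exact Submodule.smul_mem _ _ (hmem (by linarith) hf₂)
  · exact Submodule.smul_mem _ _ (hmem (by linarith) hf₁)
  · exact hmem (by linarith) hf

lemma inner_notch_shift_truncExp {f : Lp ℝ 2 (volume : Measure ℝ)} {s h T : ℝ}
    (hf : f ∈ supportedIn (Ioo 0 s)) (hh : 0 ≤ h) (hT : s + 2 * h ≤ T) (L c : ℝ) :
    ⟪notch (shift h) (exp (h * L)) f, truncExp T c⟫_ℝ =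
      notchMultiplier h L c * ⟪f, truncExp T c⟫_ℝ :=
  inner_notch (inner_shift_truncExp hf hh (by linarith) c)
    (inner_shift_truncExp (shift_mem_supportedIn hf hh) hh (by linarith) c) L

lemma exists_inner_truncExp_eq_prod_notchMultiplier {ι : Type*} {ψ : Lp ℝ 2 (volume : Measure ℝ)}
    {s T : ℝ} (hψ : ψ ∈ supportedIn (Ioo 0 s)) {h : ι → ℝ} (hh : ∀ l, 0 ≤ h l) (L : ι → ℝ)
    (F : Finset ι) (hT : s + ∑ l ∈ F, 2 * h l ≤ T) :
    ∃ f ∈ supportedIn (Ioo 0 (s + ∑ l ∈ F, 2 * h l)),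
      ‖f‖ ≤ (∏ l ∈ F, ‖notch (shift (h l)) (exp (h l * L l))‖) * ‖ψ‖ ∧
      ∀ c, ⟪f, truncExp T c⟫_ℝ =
        (∏ l ∈ F, notchMultiplier (h l) (L l) c) * ⟪ψ, truncExp T c⟫_ℝ := by
  classical
  induction F using Finset.induction with
  | empty => exact ⟨ψ, by simpa using hψ, by simp, by simp⟩
  | insert a F ha ih =>
    rw [Finset.sum_insert ha, add_left_comm, add_comm] at hT
    obtain ⟨f, hf, hnorm, hinner⟩ := ih (by linarith [hh a])
    refine ⟨notch (shift (h a)) (exp (h a * L a)) f, ?_, ?_, fun c ↦ ?_⟩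
    · rw [Finset.sum_insert ha, add_left_comm, add_comm]
      exact notch_shift_mem_supportedIn hf (hh a) _
    · rw [Finset.prod_insert ha, mul_assoc]
      exact (ContinuousLinearMap.le_opNorm _ _).trans (by gcongr)
    · rw [inner_notch_shift_truncExp hf (hh a) hT, hinner, Finset.prod_insert ha, mul_assoc]

lemma mul_exp_neg_le_inner_indicatorConstLp_truncExp {s T c : ℝ} (hs : 0 ≤ s) (hT : s ≤ T)
    (hc : 0 ≤ c) : s * exp (-(s * c)) ≤
      ⟪indicatorConstLp 2 (measurableSet_Ioo (a := 0) (b := s)) measure_Ioo_lt_top.ne (1 : ℝ),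
        truncExp T c⟫_ℝ := by
  have hint : IntegrableOn (fun t ↦ exp (-c * t)) (Ioo 0 s) :=
    (Continuous.integrableOn_Icc (by fun_prop)).mono_set Ioo_subset_Icc_self
  have heq : ∀ᵐ t, t ∈ Ioo 0 s → truncExp T c t = exp (-c * t) := by
    filter_upwards [coeFn_truncExp T c] with t ht hts
    rw [ht, indicator_of_mem (Ioo_subset_Ioo_right hT hts)]
  rw [L2.inner_indicatorConstLp_one, setIntegral_congr_ae measurableSet_Ioo heq]
  calc s * exp (-(s * c)) = ∫ _ in Ioo 0 s, exp (-(s * c)) := by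
        rw [setIntegral_const, volume_real_Ioo_of_le hs, sub_zero, smul_eq_mul]
    _ ≤ ∫ t in Ioo 0 s, exp (-c * t) := by
      refine setIntegral_mono_on (integrableOn_const measure_Ioo_lt_top.ne) hint measurableSet_Ioo
        fun t ht ↦ exp_le_exp.2 ?_
      linarith [mul_le_mul_of_nonneg_left ht.2.le hc]

lemma exists_mem_supportedIn_exp_neg_le_inner_truncExp {s : ℝ} (hs : 0 < s) :
    ∃ ψ ∈ supportedIn (Ioo 0 s), ∀ T ≥ s, ∀ c ≥ 0, exp (-(s * c)) ≤ ⟪ψ, truncExp T c⟫_ℝ := by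
  refine ⟨s⁻¹ • indicatorConstLp 2 measurableSet_Ioo measure_Ioo_lt_top.ne 1,
    Submodule.smul_mem _ _ (indicatorConstLp_mem_supportedIn _ _ _), fun T hT c hc ↦ ?_⟩
  rw [real_inner_smul_left, ← div_eq_inv_mul, le_div_iff₀' hs]
  exact mul_exp_neg_le_inner_indicatorConstLp_truncExp hs.le hT hc

end Translation

section Exponentials

open Real
open scoped InnerProductSpace

variable {ι : Type*} {Λ : ι → ℝ}

lemma exists_pos_sum_le_prod_norm_notch_le (hΛ : ∀ l, 0 < Λ l)
    (hsum : Summable fun l ↦ 1 / Λ l) {δ : ℝ} (hδ : 0 < δ) :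
    ∃ h : ι → ℝ, (∀ l, 0 < h l) ∧ (∀ F : Finset ι, ∑ l ∈ F, 2 * h l ≤ δ) ∧
      ∃ K : ℝ, ∀ F : Finset ι, ∏ l ∈ F, ‖notch (shift (h l)) (exp (h l * Λ l))‖ ≤ K := by
  obtain ⟨h, hh, hhΛ, hhδ⟩ := exists_pos_eventually_eq_sum_le (g := fun l ↦ log 6 * (1 / Λ l))
    (hsum.mul_left _) (fun l ↦ by have := hΛ l; positivity) (half_pos hδ)
  refine ⟨h, hh, fun F ↦ ?_, exists_prod_le_of_eventually_le_one (fun _ ↦ norm_nonneg _) ?_⟩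
  · rw [← Finset.mul_sum]
    linarith [hhδ F]
  · filter_upwards [hhΛ] with l hl
    have hB : exp (h l * Λ l) = 6 := by
      rw [hl, mul_assoc, one_div_mul_cancel (hΛ l).ne', mul_one, exp_log (by norm_num)]
    rw [hB]
    exact norm_notch_le_one _ (by norm_num) (by norm_num)

lemma exists_norm_le_prod_mul_exp_le_abs_inner_truncExp (hΛ : ∀ l, 0 < Λ l)
    (hsum : Summable fun l ↦ 1 / Λ l) {T ε : ℝ} (hT : 0 < T) (hε : 0 < ε) :
    ∃ K : ℝ, ∀ F : Finset ι, ∃ f : Lp ℝ 2 (volume : Measure ℝ), ‖f‖ ≤ K ∧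
      (∀ l ∈ F, ⟪f, truncExp T (Λ l)⟫_ℝ = 0) ∧
      ∀ c ≥ 0, (∏ l ∈ F, |1 - c / Λ l|) * exp (-(ε * c)) ≤ |⟪f, truncExp T c⟫_ℝ| := by
  obtain ⟨s, hs, hsT, hsε⟩ : ∃ s > 0, 2 * s ≤ T ∧ 2 * s ≤ ε :=
    ⟨min T ε / 2, by positivity, by linarith [min_le_left T ε], by linarith [min_le_right T ε]⟩
  obtain ⟨ψ, hψs, hψ⟩ := exists_mem_supportedIn_exp_neg_le_inner_truncExp hs
  obtain ⟨h, hh, hhs, K, hK⟩ := exists_pos_sum_le_prod_norm_notch_le hΛ hsum hs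
  refine ⟨K * ‖ψ‖, fun F ↦ ?_⟩
  have hhF := hhs F
  obtain ⟨f, -, hfK, hf⟩ := exists_inner_truncExp_eq_prod_notchMultiplier hψs (fun l ↦ (hh l).le) Λ
    F (T := T) (by linarith)
  refine ⟨f, hfK.trans (by gcongr; exact hK F), fun l hl ↦ ?_, fun c hc ↦ ?_⟩
  · rw [hf, Finset.prod_eq_zero hl (notchMultiplier_self _ _), zero_mul]
  rw [hf, abs_mul]
  calc (∏ l ∈ F, |1 - c / Λ l|) * exp (-(ε * c))
      ≤ (∏ l ∈ F, |1 - c / Λ l|) * exp (-((∑ l ∈ F, 2 * h l) * c) + -(s * c)) := by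
        gcongr
        nlinarith
    _ = (∏ l ∈ F, |1 - c / Λ l|) * exp (-((∑ l ∈ F, 2 * h l) * c)) * exp (-(s * c)) := by
        rw [exp_add, mul_assoc]
    _ ≤ |∏ l ∈ F, notchMultiplier (h l) (Λ l) c| * |⟪ψ, truncExp T c⟫_ℝ| := by
        gcongr
        · exact prod_mul_exp_le_abs_prod_notchMultiplier hh hΛ hc F
        · exact (hψ T (by linarith) c hc).trans (le_abs_self _)

lemma exists_hasFiniteDuals_truncExp {T : ℝ} (hT : 0 < T) {Λ : ℕ → ℝ} (hΛ : ∀ k, 0 < Λ k)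
    (hsum : Summable fun k ↦ 1 / Λ k) {ρ : ℝ} (hρ : 0 < ρ)
    (hgap : ∀ k l : ℕ, ρ * |(k : ℝ) - l| ≤ |Λ k - Λ l|) {ε : ℝ} (hε : 0 < ε) :
    ∃ C > 0, ∀ k, HasFiniteDuals (fun l ↦ truncExp T (Λ l)) k (C * exp (ε * Λ k)) := by
  obtain ⟨A, hA, hprod⟩ :=
    exists_mul_exp_neg_le_prod_abs_one_sub_div hΛ hsum hρ hgap (half_pos hε)
  obtain ⟨K, hK⟩ := exists_norm_le_prod_mul_exp_le_abs_inner_truncExp hΛ hsum hT (half_pos hε)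
  have hdual (k : ℕ) : HasFiniteDuals (fun l ↦ truncExp T (Λ l)) k (K / A * exp (ε * Λ k)) := by
    intro F hkF
    obtain ⟨f, hfK, hfF, hf⟩ := hK F
    set D := ⟪f, truncExp T (Λ k)⟫_ℝ
    have hD : A * exp (-(ε * Λ k)) ≤ |D| := calc
      A * exp (-(ε * Λ k)) = A * exp (-(ε / 2 * Λ k)) * exp (-(ε / 2 * Λ k)) := by
        rw [mul_assoc, ← exp_add]
        ring_nf
      _ ≤ (∏ l ∈ F, |1 - Λ k / Λ l|) * exp (-(ε / 2 * Λ k)) := by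
        gcongr
        exact hprod k F hkF
      _ ≤ |D| := hf _ (hΛ k).le
    have hD0 : 0 < |D| := lt_of_lt_of_le (by positivity) hD
    refine ⟨D⁻¹ • f, ?_, ?_, fun l hl ↦ ?_⟩
    · calc ‖D⁻¹ • f‖ = ‖f‖ / |D| := by rw [norm_smul, norm_inv, norm_eq_abs, div_eq_inv_mul]
        _ ≤ K / (A * exp (-(ε * Λ k))) := by
          have hK0 := (norm_nonneg f).trans hfK
          gcongr
        _ = K / A * exp (ε * Λ k) := by rw [exp_neg, ← div_div, div_inv_eq_mul]
    · rw [real_inner_smul_left, inv_mul_cancel₀ (abs_pos.1 hD0)]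
    · rw [real_inner_smul_left, hfF l hl, mul_zero]
  exact ⟨K / A, pos_of_mul_pos_left (hdual 0).pos (exp_pos _).le, hdual⟩

end Exponentials

/-- Existence of a biorthogonal family to the exponentials `e^{-Λ_k t}` in `L²(0,T)`,
with the bound `‖q_k‖ ≤ C_ε e^{ε Λ_k}`. -/
theorem exists_biorthogonal_family (T : ℝ) (hT : 0 < T)
    (Λ : ℕ → ℝ) (hΛpos : ∀ k, 0 < Λ k)
    (hsum : Summable fun k => 1 / Λ k)
    (ρ : ℝ) (hρ : 0 < ρ)
    (hgap : ∀ k l : ℕ, ρ * |(k : ℝ) - (l : ℝ)| ≤ |Λ k - Λ l|) :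
    ∃ q : ℕ → Lp ℝ 2 (volume.restrict (Set.Ioo (0 : ℝ) T)),
      (∀ k l : ℕ,
        (∫ t in Set.Ioo (0 : ℝ) T, (q k : ℝ → ℝ) t * Real.exp (-Λ l * t)) =
          if k = l then 1 else 0) ∧
      (∀ ε > 0, ∃ C > 0, ∀ k, ‖q k‖ ≤ C * Real.exp (ε * Λ k)) := by
  have hdual {ε : ℝ} (hε : 0 < ε) := exists_hasFiniteDuals_truncExp hT hΛpos hsum hρ hgap hε
  obtain ⟨q, hq, hnorm⟩ := HasFiniteDuals.exists_biorthogonal fun k ↦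
    have ⟨_, _, hC⟩ := hdual one_pos
    ⟨_, hC k⟩
  refine ⟨fun k ↦ ((Lp.memLp (q k)).restrict _).toLp, fun k l ↦ ?_, fun ε hε ↦ ?_⟩
  · rw [← hq k l, inner_truncExp]
    refine integral_congr_ae ?_
    filter_upwards [((Lp.memLp (q k)).restrict (Set.Ioo 0 T)).coeFn_toLp] with t ht
    rw [ht]
  · obtain ⟨C, hC, hCk⟩ := hdual hε
    exact ⟨C, hC, fun k ↦ (norm_Lp_toLp_restrict_le _ _).trans (hnorm k _ (hCk k))⟩
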